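/- Let p: E → B and p': E' → B be fibrations with E and E' metric spaces that are fiberwise homotopy equivalent, i.e., there exist maps f: E → E' with p' ∘ f = p and g: E' → E with p ∘ g = p', together with homotopies from g ∘ f to id_E and from f ∘ g to id_{E'} that are fiberwise (respect p and p' at every time). Then for every integer r ≥ 2, dTC_r[p: E → B] = dTC_r[p': E' → B]. -/

import Mathlib

open MeasureTheory unitInterval Set

universe u v

/-- A (Hurewicz) fibration: a continuous map with the homotopy lifting property
with respect to all topological spaces. -/
def IsHurewiczFibration {E B : Type*} [TopologicalSpace E] [TopologicalSpace B]
    (p : E → B) : Prop :=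
  Continuous p ∧
  ∀ (X : Type u) [TopologicalSpace X] (f : X → E) (H : X × I → B),
    Continuous f → Continuous H → (∀ x, H (x, 0) = p (f x)) →
    ∃ G : X × I → E, Continuous G ∧ (∀ x, G (x, 0) = f x) ∧ ∀ z, H z = p (G z)

/-- `dsecat p`: the distributional sectional category of `p : E → B` (with `E` a metric
space), namely the smallest `n` such that the fibration
`𝔅ₙ₊₁(p) : Eₙ₊₁(p) → B` of probability measures with finite support of size at most `n+1`
contained in single fibers of `p` (with the Lévy–Prokhorov metric topology) admits a
continuous section.  (Value `⊤` if no such `n` exists.) -/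
noncomputable def dsecat {E : Type u} {B : Type v} [MetricSpace E] [TopologicalSpace B]
    (p : E → B) : ℕ∞ :=
  letI : MeasurableSpace E := borel E
  haveI : BorelSpace E := ⟨rfl⟩
  sInf {n : ℕ∞ | ∃ m : ℕ, n = (m : ℕ∞) ∧
    ∃ s : B → LevyProkhorov (ProbabilityMeasure E), Continuous s ∧
      ∀ b : B, ∃ S : Finset E, S.card ≤ m + 1 ∧ (↑S : Set E) ⊆ p ⁻¹' {b} ∧
        (s b).toMeasure (↑S : Set E) = 1}

/-- The classical sectional category (Schwarz genus) of a map: the least `n` such that the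
base admits a cover by `n+1` open sets over each of which there is a continuous partial
section. -/
noncomputable def secat {E : Type u} {B : Type v} [TopologicalSpace E] [TopologicalSpace B]
    (p : E → B) : ℕ∞ :=
  sInf {n : ℕ∞ | ∃ m : ℕ, n = (m : ℕ∞) ∧
    ∃ U : Fin (m + 1) → Set B, (∀ i, IsOpen (U i)) ∧ (⋃ i, U i) = Set.univ ∧
      ∀ i, ∃ s : U i → E, Continuous s ∧ ∀ x : U i, p (s x) = (x : B)}

/-- The point `(i)/(r-1)` of the unit interval, for `i : Fin r`. -/
noncomputable def tDiv (r : ℕ) (i : Fin r) : I :=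
  Set.projIcc (0 : ℝ) 1 zero_le_one ((i : ℝ) / (r - 1))

/-- The space `E^I_B` of paths in `E` lying in one single fiber of `p : E → B`. -/
def FibredPaths {E : Type u} {B : Type v} [TopologicalSpace E] [TopologicalSpace B]
    (p : E → B) : Type u :=
  {γ : C(I, E) // ∃ b : B, ∀ t : I, p (γ t) = b}

/-- The fibred product `E^r_B` of `r` copies of `E` over `B`. -/
def FibredProd {E : Type u} {B : Type v} [TopologicalSpace E] [TopologicalSpace B]
    (p : E → B) (r : ℕ) : Type u :=
  {x : Fin r → E // ∀ i j, p (x i) = p (x j)}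

/-- The fibration `Π_r^E : E^I_B → E^r_B`,
`γ ↦ (γ(0), γ(1/(r-1)), …, γ((r-2)/(r-1)), γ(1))`. -/
noncomputable def parmEval {E : Type u} {B : Type v} [TopologicalSpace E] [TopologicalSpace B]
    (p : E → B) (r : ℕ) : FibredPaths p → FibredProd p r :=
  fun γ => ⟨fun i => γ.1 (tDiv r i), by
    obtain ⟨b, hb⟩ := γ.2
    intro i j
    rw [hb, hb]⟩

noncomputable instance {E : Type u} {B : Type v} [MetricSpace E] [TopologicalSpace B] (p : E → B) :
    MetricSpace (FibredPaths p) :=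
  inferInstanceAs (MetricSpace {γ : C(I, E) // ∃ b : B, ∀ t : I, p (γ t) = b})

instance {E : Type u} {B : Type v} [TopologicalSpace E] [TopologicalSpace B] (p : E → B) :
    TopologicalSpace (FibredPaths p) :=
  inferInstanceAs (TopologicalSpace {γ : C(I, E) // ∃ b : B, ∀ t : I, p (γ t) = b})

instance {E : Type u} {B : Type v} [TopologicalSpace E] [TopologicalSpace B] (p : E → B)
    (r : ℕ) : TopologicalSpace (FibredProd p r) :=
  inferInstanceAs (TopologicalSpace {x : Fin r → E // ∀ i j, p (x i) = p (x j)})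

/-- The `r`-th sequential parametrized distributional complexity
`dTC_r[p : E → B] = dsecat (Π_r^E)`. -/
noncomputable def dTCfib {E : Type u} {B : Type v} [MetricSpace E] [TopologicalSpace B]
    (p : E → B) (r : ℕ) : ℕ∞ :=
  dsecat (parmEval p r)

/-- The `r`-th sequential parametrized topological complexity
`TC_r[p : E → B] = secat (Π_r^E)`. -/
noncomputable def TCfib {E : Type u} {B : Type v} [TopologicalSpace E] [TopologicalSpace B]
    (p : E → B) (r : ℕ) : ℕ∞ :=
  secat (parmEval p r)

/-- The fibration `π_r^X : X^I → X^r`, `φ ↦ (φ(0), φ(1/(r-1)), …, φ(1))`. -/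
noncomputable def freeEval (X : Type u) [TopologicalSpace X] (r : ℕ) :
    C(I, X) → (Fin r → X) :=
  fun φ i => φ (tDiv r i)

/-- The `r`-th sequential distributional complexity `dTC_r(X) = dsecat (π_r^X)`. -/
noncomputable def dTC (X : Type u) [MetricSpace X] (r : ℕ) : ℕ∞ :=
  dsecat (freeEval X r)

/-- The distributional category `dcat(X) = dsecat (P₀(X) → X)` of a pointed space,
where `P₀(X) = {φ : I → X | φ(1) = x₀}` and the fibration is evaluation at `0`. -/
noncomputable def dcat (X : Type u) [MetricSpace X] (x₀ : X) : ℕ∞ :=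
  dsecat (fun φ : {φ : C(I, X) // φ 1 = x₀} => φ.1 0)

open scoped Topology

/-!
Let `E` be dominated by `E'` over `B` through `f`, `g` and a homotopy `H` from `g ∘ f` to the
identity. Given `x ∈ E^r_B` and a path in a fiber of `p'` passing through the points `f (x i)`, its
image under `g` passes through `g (f (x i))`; detours along the tracks `H (x i, ·)` turn it into a
path in the fiber of `p` passing through the points `x i`. This is the homotopy extension property
of a finite subset of `I`, so the new path depends continuously on `x` and on the old one.
Pushing measures forward along this family of maps turns a distributional section of `Π_r^{E'}`
into one of `Π_r^E`. The pushforward is Lévy–Prokhorov continuous although the maps are only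
continuous, not uniformly so, because every measure involved is carried by a finite set.
-/

section LevyProkhorov

variable {X Y : Type*} [MeasurableSpace X] [MeasurableSpace Y]

theorem aemeasurable_of_countable_of_ae_mem [MeasurableSingletonClass X] {μ : Measure X}
    {S : Set X} (hS : S.Countable) (hμ : ∀ᵐ x ∂μ, x ∈ S) (F : X → Y) : AEMeasurable F μ := by
  have := hS.to_subtype
  rw [← Measure.restrict_eq_self_of_ae_mem hμ]
  exact aemeasurable_restrict_of_measurable_subtype hS.measurableSet (measurable_of_countable _)

theorem levyProkhorovDist_map_le [PseudoEMetricSpace X] [MeasurableSingletonClass X]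
    [PseudoEMetricSpace Y] [OpensMeasurableSpace Y] {μ ν : Measure X} [IsProbabilityMeasure μ]
    [IsProbabilityMeasure ν] {S T : Set X} {F G : X → Y} {δ ε : ℝ} (hS : S.Countable)
    (hμ : ∀ᵐ x ∂μ, x ∈ S) (hν : ∀ᵐ y ∂ν, y ∈ T) (hG : AEMeasurable G ν)
    (hdist : levyProkhorovDist μ ν < δ) (hδε : δ ≤ ε)
    (hFG : ∀ x ∈ S, ∀ y ∈ T, edist y x < ENNReal.ofReal δ →
      edist (G y) (F x) < ENNReal.ofReal ε) :
    levyProkhorovDist (μ.map F) (ν.map G) ≤ ε := by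
  have hF : AEMeasurable F μ := aemeasurable_of_countable_of_ae_mem hS hμ F
  have := Measure.isProbabilityMeasure_map hF
  have := Measure.isProbabilityMeasure_map hG
  have hδ : 0 < δ := ENNReal.toReal_nonneg.trans_lt hdist
  refine levyProkhorovDist_le_of_forall_le _ _ (hδ.le.trans hδε) fun η A hη hA => ?_
  rw [Measure.map_apply_of_aemeasurable hF hA,
    Measure.map_apply_of_aemeasurable hG Metric.isOpen_thickening.measurableSet]
  calc μ (F ⁻¹' A)
      ≤ μ (S ∩ F ⁻¹' A) := measure_mono_ae <| by
        filter_upwards [hμ] with x hxS hxA using ⟨hxS, hxA⟩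
    _ ≤ ν (Metric.thickening δ (S ∩ F ⁻¹' A)) + ENNReal.ofReal δ := by
        have hlt : levyProkhorovEDist μ ν < ENNReal.ofReal δ :=
          (ENNReal.lt_ofReal_iff_toReal_lt (levyProkhorovEDist_ne_top _ _)).2 hdist
        simpa only [ENNReal.toReal_ofReal hδ.le] using
          left_measure_le_of_levyProkhorovEDist_lt hlt (hS.mono inter_subset_left).measurableSet
    _ ≤ ν (G ⁻¹' Metric.thickening η A) + ENNReal.ofReal η := by
        refine add_le_add (measure_mono_ae ?_) (ENNReal.ofReal_le_ofReal (hδε.trans hη.le))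
        filter_upwards [hν] with y hyT hy
        obtain ⟨x, ⟨hxS, hxA⟩, hyx⟩ := (Metric.mem_thickening_iff_exists_edist_lt _ _).1 hy
        exact (Metric.mem_thickening_iff_exists_edist_lt _ _).2
          ⟨F x, hxA, (hFG x hxS y hyT hyx).trans_le (ENNReal.ofReal_le_ofReal hη.le)⟩

end LevyProkhorov

theorem eventually_dist_lt_of_continuousOn_uncurry {A X Y : Type*} [TopologicalSpace A]
    [PseudoMetricSpace X] [PseudoMetricSpace Y] {F : A → X → Y} {D : Set (A × X)}
    (hF : ContinuousOn (Function.uncurry F) D) {a₀ : A} {S : Set X} (hS : S.Finite)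
    (hSD : ∀ x ∈ S, (a₀, x) ∈ D) {ε : ℝ} (hε : 0 < ε) :
    ∀ᶠ δ in 𝓝[>] (0 : ℝ), ∀ᶠ a in 𝓝 a₀, ∀ x ∈ S, ∀ y, (a, y) ∈ D → dist y x < δ →
      dist (F a y) (F a₀ x) < ε := by
  suffices ∀ x ∈ S, ∀ᶠ δ in 𝓝[>] (0 : ℝ), ∀ᶠ a in 𝓝 a₀, ∀ y, (a, y) ∈ D → dist y x < δ →
      dist (F a y) (F a₀ x) < ε from
    ((Filter.eventually_all_finite hS).2 this).mono fun δ =>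
      (Filter.eventually_all_finite hS).2
  intro x hx
  have hnear : ∀ᶠ w in 𝓝 a₀ ×ˢ 𝓝 x, w ∈ D → dist (F w.1 w.2) (F a₀ x) < ε := by
    rw [← nhds_prod_eq, ← eventually_nhdsWithin_iff]
    exact Metric.tendsto_nhds.1 (hF (a₀, x) (hSD x hx)) ε hε
  obtain ⟨P, hP, Q, hQ, hPQ⟩ := Filter.eventually_prod_iff.1 hnear
  obtain ⟨d, hd, hball⟩ := Metric.eventually_nhds_iff.1 hQ
  filter_upwards [Ioo_mem_nhdsGT hd] with δ hδ
  filter_upwards [hP] with a ha y hyD hyx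
  exact hPQ ha (hball (hyx.trans hδ.2)) hyD

theorem continuous_levyProkhorov_map {A X Y : Type*} [TopologicalSpace A]
    [PseudoMetricSpace X] [MeasurableSpace X] [OpensMeasurableSpace X] [MeasurableSingletonClass X]
    [PseudoMetricSpace Y] [MeasurableSpace Y] [OpensMeasurableSpace Y]
    {μ : A → LevyProkhorov (ProbabilityMeasure X)} (hμ : Continuous μ)
    {F : A → X → Y} {D : Set (A × X)} (hF : ContinuousOn (Function.uncurry F) D)
    (hsupp : ∀ a, ∃ S : Set X, S.Finite ∧ (∀ x ∈ S, (a, x) ∈ D) ∧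
      ∀ᵐ x ∂((μ a).toMeasure : Measure X), x ∈ S)
    (hm : ∀ a, AEMeasurable (F a) ((μ a).toMeasure : Measure X)) :
    Continuous fun a => LevyProkhorov.ofMeasure ((μ a).toMeasure.map (hm a)) := by
  refine continuous_iff_continuousAt.2 fun a₀ => Metric.tendsto_nhds.2 fun ε hε => ?_
  obtain ⟨S, hS, hSD, hμS⟩ := hsupp a₀
  have hnear := eventually_dist_lt_of_continuousOn_uncurry hF hS hSD (half_pos hε)
  obtain ⟨δ, hclose, hδ, hδε⟩ := (hnear.and (Ioo_mem_nhdsGT (half_pos hε))).exists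
  filter_upwards [hclose, Metric.tendsto_nhds.1 (hμ.tendsto a₀) δ hδ] with a ha haμ
  obtain ⟨T, -, hTD, hμT⟩ := hsupp a
  rw [dist_comm, LevyProkhorov.dist_probabilityMeasure_def] at haμ ⊢
  refine (levyProkhorovDist_map_le hS.countable hμS hμT (hm a) haμ hδε.le ?_).trans_lt
    (half_lt_self hε)
  intro x hx y hy hyx
  rw [edist_lt_ofReal] at hyx ⊢
  exact ha x hx y (hTD y hy) hyx

section DistributionalSection

/-- A distributional `k`-section of `p : E → B`: a continuous section of the paper's
`𝔅_k(p) : E_k(p) → B`, encoded as a map into all probability measures on `E` whose value at `b`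
is carried by at most `k` points of the fiber over `b`. The `m` of `dsecat` corresponds to
`k = m + 1`. -/
def IsDistributionalSection {E B : Type*} [MetricSpace E] [MeasurableSpace E] [BorelSpace E]
    [TopologicalSpace B] (p : E → B) (k : ℕ) (s : B → LevyProkhorov (ProbabilityMeasure E)) :
    Prop :=
  Continuous s ∧ ∀ b : B, ∃ S : Finset E, S.card ≤ k ∧ (↑S : Set E) ⊆ p ⁻¹' {b} ∧
    (s b).toMeasure (↑S : Set E) = 1

variable {X X' A A' : Type*} [MetricSpace X] [MetricSpace X'] [TopologicalSpace A]
  [TopologicalSpace A'] {q : X → A} {q' : X' → A'} {φ : A → A'}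

theorem IsDistributionalSection.surjective [MeasurableSpace X] [BorelSpace X] {k : ℕ}
    {s : A → LevyProkhorov (ProbabilityMeasure X)} (hs : IsDistributionalSection q k s) :
    Function.Surjective q := by
  intro a
  obtain ⟨S, -, hfiber, hone⟩ := hs.2 a
  obtain ⟨x, hx⟩ : (↑S : Set X).Nonempty := by
    by_contra hempty
    simp [Set.not_nonempty_iff_eq_empty.1 hempty] at hone
  exact ⟨x, hfiber hx⟩

theorem IsDistributionalSection.exists_of_pullback [MeasurableSpace X] [BorelSpace X]
    [MeasurableSpace X'] [BorelSpace X'] {k : ℕ}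
    {s : A' → LevyProkhorov (ProbabilityMeasure X')} (hs : IsDistributionalSection q' k s)
    (hφ : Continuous φ) {F : φ.Pullback q' → X} (hF : Continuous F)
    (hqF : ∀ w, q (F w) = w.fst) :
    ∃ t : A → LevyProkhorov (ProbabilityMeasure X), IsDistributionalSection q k t := by
  classical
  obtain hA | ⟨⟨a₀⟩⟩ := isEmpty_or_nonempty A
  · exact ⟨isEmptyElim, continuous_of_discreteTopology, isEmptyElim⟩
  obtain ⟨x₀, hx₀⟩ := hs.surjective (φ a₀)
  obtain ⟨Φ, hΦ⟩ : ∃ Φ : A → X' → X, ∀ w : φ.Pullback q', Φ w.fst w.snd = F w :=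
    ⟨fun a x => Function.extend Subtype.val F (fun _ => F ⟨(a₀, x₀), hx₀.symm⟩) (a, x),
      Subtype.val_injective.extend_apply F _⟩
  have hΦc : ContinuousOn (Function.uncurry Φ) {w | φ w.1 = q' w.2} :=
    continuousOn_iff_continuous_domRestrict.2 (hF.congr fun w => (hΦ w).symm)
  choose S hcard hfiber hone using hs.2
  have hae : ∀ a, ∀ᵐ x ∂((s (φ a)).toMeasure : Measure X'), x ∈ (S (φ a) : Set X') := fun a => by
    refine (mem_ae_iff_prob_eq_one (Finset.measurableSet _)).2 ?_
    rw [← ProbabilityMeasure.ennreal_coeFn_eq_coeFn_toMeasure, hone, ENNReal.coe_one]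
  have hm : ∀ a, AEMeasurable (Φ a) ((s (φ a)).toMeasure : Measure X') := fun a =>
    aemeasurable_of_countable_of_ae_mem (S (φ a)).countable_toSet (hae a) (Φ a)
  refine ⟨fun a => LevyProkhorov.ofMeasure ((s (φ a)).toMeasure.map (hm a)),
    continuous_levyProkhorov_map (hs.1.comp hφ) hΦc (fun a => ⟨S (φ a), (S (φ a)).finite_toSet,
      fun x hx => (hfiber _ hx).symm, hae a⟩) hm,
    fun a => ⟨(S (φ a)).image (Φ a), Finset.card_image_le.trans (hcard _), ?_, ?_⟩⟩
  · rw [Finset.coe_image, image_subset_iff]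
    intro x hx
    exact (congrArg q (hΦ ⟨(a, x), (hfiber _ hx).symm⟩)).trans (hqF _)
  · refine le_antisymm (ProbabilityMeasure.apply_le_one _ _) ?_
    rw [ProbabilityMeasure.map_apply_of_aemeasurable _ _ (Finset.measurableSet _), ← hone (φ a),
      Finset.coe_image]
    exact ProbabilityMeasure.apply_mono _ (subset_preimage_image _ _)

theorem dsecat_le_of_pullback (hφ : Continuous φ) {F : φ.Pullback q' → X} (hF : Continuous F)
    (hqF : ∀ w, q (F w) = w.fst) : dsecat q ≤ dsecat q' := by
  borelize X X'
  refine sInf_le_sInf ?_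
  rintro n ⟨m, rfl, s, hs⟩
  exact ⟨m, rfl, IsDistributionalSection.exists_of_pullback hs hφ hF hqF⟩

end DistributionalSection

theorem exists_retraction_near_finite {X : Type u} [TopologicalSpace X] [T4Space X]
    [TietzeExtension.{u, u} X]
    {T : Set X} (hT : T.Finite) :
    ∃ (φ : C(X, X)) (c : C(X, I)), EqOn φ id T ∧ EqOn c 1 T ∧ ∀ x, c x = 0 ∨ φ x ∈ T := by
  obtain ⟨U, hU, hdisj⟩ := hT.t2_separation
  obtain ⟨W, hW, hTW, hWU⟩ := normal_exists_closure_subset hT.isClosed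
    (isOpen_biUnion fun x _ => (hU x).2) fun x hx => mem_biUnion hx (hU x).1
  have hselect : ∀ y, ∃ z, ∀ x ∈ T, y ∈ U x → z = x := fun y => by
    by_cases h : ∃ x ∈ T, y ∈ U x
    · obtain ⟨x, hx, hyx⟩ := h
      exact ⟨x, fun x' hx' hyx' => hdisj.elim_set hx hx' y hyx hyx'⟩
    · exact ⟨y, fun x hx hyx => (h ⟨x, hx, hyx⟩).elim⟩
  choose ρ hρ using hselect
  have hρc : ContinuousOn ρ (closure W) := fun y hy => by
    obtain ⟨x, hx, hyx⟩ := mem_iUnion₂.1 (hWU hy)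
    have : ρ =ᶠ[𝓝 y] fun _ => x :=
      Filter.eventually_of_mem ((hU x).2.mem_nhds hyx) fun y => hρ y x hx
    exact (continuousAt_const.congr this.symm).continuousWithinAt
  obtain ⟨φ, hφ⟩ := ContinuousMap.exists_restrict_eq isClosed_closure ⟨_, hρc.domRestrict⟩
  have hφ' : EqOn φ ρ (closure W) := fun x hx => DFunLike.congr_fun hφ ⟨x, hx⟩
  obtain ⟨c, hc0, hc1, hcI⟩ := exists_continuous_zero_one_of_isClosed hW.isClosed_compl
    hT.isClosed (disjoint_compl_left_iff_subset.2 hTW)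
  refine ⟨φ, ⟨fun x => ⟨c x, hcI x⟩, by fun_prop⟩, fun x hx => ?_, fun x hx => ?_, fun x => ?_⟩
  · exact (hφ' (subset_closure (hTW hx))).trans (hρ x x hx (hU x).1)
  · exact Subtype.ext (hc1 hx)
  · by_cases hx : x ∈ W
    · obtain ⟨y, hy, hxy⟩ := mem_iUnion₂.1 (hWU (subset_closure hx))
      rw [hφ' (subset_closure hx), hρ x y hy hxy]
      exact .inr hy
    · exact .inl (Subtype.ext (hc0 hx))

theorem exists_continuousMap_eqOn_of_isClosed {X Y ι : Type*} [TopologicalSpace X]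
    [TopologicalSpace Y] {K : ι → Set X} (hK : LocallyFinite K) (hclosed : ∀ i, IsClosed (K i))
    (hcover : ∀ x, ∃ i, x ∈ K i) {f : ι → X → Y} (hf : ∀ i, ContinuousOn (f i) (K i))
    (hagree : ∀ i j, EqOn (f i) (f j) (K i ∩ K j)) :
    ∃ G : C(X, Y), ∀ i, EqOn G (f i) (K i) := by
  choose idx hidx using hcover
  have heq : ∀ i, EqOn (fun x => f (idx x) x) (f i) (K i) := fun i x hx =>
    hagree (idx x) i ⟨hidx x, hx⟩
  exact ⟨⟨_, hK.continuous (iUnion_eq_univ_iff.2 fun x => ⟨_, hidx x⟩) hclosed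
    fun i => (hf i).congr (heq i)⟩, heq⟩

-- Near `τ i`, `φ` holds the point still at `τ i`, so the room gained there can be spent running
-- `h i` up to the time `c`, which rises from `0` away from the nodes to `1` at `τ i`.
theorem exists_endpoint_homotopyExtension {X : Type u} {Z E ι : Type*} [TopologicalSpace X]
    [T4Space X] [TietzeExtension.{u, u} X] [TopologicalSpace Z] [TopologicalSpace E] [Finite ι]
    {τ : ι → X} (hτ : Function.Injective τ) (γ : C(Z × X, E)) (h : ι → C(Z × I, E))
    (hγ : ∀ i z, h i (z, 0) = γ (z, τ i)) :
    ∃ G : C(Z × X, E), (∀ z i, G (z, τ i) = h i (z, 1)) ∧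
      ∀ z x, (∃ y, G (z, x) = γ (z, y)) ∨ ∃ i s, G (z, x) = h i (z, s) := by
  obtain ⟨φ, c, hφ, hc, hφc⟩ := exists_retraction_near_finite (finite_range τ)
  let K : Option ι → Set (Z × X) := fun o => o.elim {w | c w.2 = 0} fun i => {w | φ w.2 = τ i}
  let f : Option ι → Z × X → E := fun o =>
    o.elim (fun w => γ (w.1, φ w.2)) fun i w => h i (w.1, c w.2)
  have hclosed : ∀ o, IsClosed (K o) := by
    rintro (_ | i)
    · exact isClosed_eq (by fun_prop) continuous_const
    · exact isClosed_eq (by fun_prop) continuous_const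
  have hcover : ∀ w, ∃ o, w ∈ K o := fun w => by
    obtain h0 | ⟨i, hi⟩ := hφc w.2
    · exact ⟨none, h0⟩
    · exact ⟨some i, hi.symm⟩
  have hf : ∀ o, Continuous (f o) := by
    rintro (_ | i) <;> simp only [f, Option.elim] <;> fun_prop
  have hagree : ∀ o o', EqOn (f o) (f o') (K o ∩ K o') := by
    have hnone : ∀ i, EqOn (f none) (f (some i)) (K none ∩ K (some i)) := fun i w hw => by
      change γ (w.1, φ w.2) = h i (w.1, c w.2)
      rw [show c w.2 = 0 from hw.1, show φ w.2 = τ i from hw.2, hγ]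
    rintro (_ | i) (_ | j) w ⟨hw, hw'⟩
    · rfl
    · exact hnone j ⟨hw, hw'⟩
    · exact (hnone i ⟨hw', hw⟩).symm
    · rw [hτ (hw.symm.trans hw')]
  obtain ⟨G, hG⟩ := exists_continuousMap_eqOn_of_isClosed (locallyFinite_of_finite K) hclosed
    hcover (fun o => (hf o).continuousOn) hagree
  refine ⟨G, fun z i => ?_, fun z x => ?_⟩
  · refine (hG (some i) (hφ (mem_range_self i))).trans (congrArg (fun s => h i (z, s)) ?_)
    exact hc (mem_range_self i)
  · obtain h0 | ⟨i, hi⟩ := hφc x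
    · exact .inl ⟨φ x, hG none h0⟩
    · exact .inr ⟨i, c x, hG (some i) hi.symm⟩

theorem coe_tDiv {r : ℕ} (hr : 1 < r) (i : Fin r) : (tDiv r i : ℝ) = i / (r - 1) := by
  have hr' : (0 : ℝ) < r - 1 := sub_pos.2 (Nat.one_lt_cast.2 hr)
  have hi : (i : ℝ) + 1 ≤ r := by exact_mod_cast i.2
  exact congrArg Subtype.val (projIcc_of_mem zero_le_one
    ⟨by positivity, (div_le_one hr').2 (by linarith)⟩)

theorem tDiv_injective (r : ℕ) : Function.Injective (tDiv r) := by
  obtain hr | hr := Nat.lt_or_ge 1 r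
  · intro i j hij
    have hr' : (r : ℝ) - 1 ≠ 0 := (sub_pos.2 (Nat.one_lt_cast.2 hr)).ne'
    have := congrArg Subtype.val hij
    rw [coe_tDiv hr, coe_tDiv hr, div_left_inj' hr'] at this
    exact Fin.ext (Nat.cast_injective this)
  · have := Fin.subsingleton_iff_le_one.2 hr
    exact Function.injective_of_subsingleton _

/-- `p` is dominated by `p'` over their common base: `f` followed by `g` is fiberwise homotopic
to the identity of `E`. A fiberwise homotopy equivalence consists of two such dominations. -/
structure FiberwiseDomination {E E' B : Type*} [TopologicalSpace E] [TopologicalSpace E']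
    (p : E → B) (p' : E' → B) where
  f : C(E, E')
  g : C(E', E)
  H : C(E × I, E)
  apply_f : ∀ e, p' (f e) = p e
  apply_g : ∀ e', p (g e') = p' e'
  H_zero : ∀ e, H (e, 0) = g (f e)
  H_one : ∀ e, H (e, 1) = e
  apply_H : ∀ e t, p (H (e, t)) = p e

namespace FiberwiseDomination

variable {E E' B : Type*} [TopologicalSpace B]

section Topological

variable [TopologicalSpace E] [TopologicalSpace E'] {p : E → B} {p' : E' → B}

/-- The map `E^r_B → E'^r_B` induced by `f`. -/
def mapProd (D : FiberwiseDomination p p') (r : ℕ) (x : FibredProd p r) : FibredProd p' r :=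
  ⟨fun i => D.f (x.1 i), fun i j => by rw [D.apply_f, D.apply_f, x.2 i j]⟩

theorem continuous_mapProd (D : FiberwiseDomination p p') (r : ℕ) : Continuous (D.mapProd r) :=
  Continuous.subtype_mk (continuous_pi fun i =>
    D.f.continuous.comp ((continuous_apply i).comp continuous_subtype_val)) _

theorem exists_liftPath (D : FiberwiseDomination p p') (r : ℕ) :
    ∃ F : (D.mapProd r).Pullback (parmEval p' r) → FibredPaths p,
      Continuous F ∧ ∀ w, parmEval p r (F w) = w.fst := by
  let W := (D.mapProd r).Pullback (parmEval p' r)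
  have hmatch : ∀ (w : W) i, D.f (w.fst.1 i) = w.snd.1 (tDiv r i) := fun w i =>
    congrFun (congrArg Subtype.val w.2) i
  have hfst : Continuous fun w : W => w.fst.1 :=
    continuous_subtype_val.comp (continuous_fst.comp continuous_subtype_val)
  have hsnd : Continuous fun w : W => w.snd.1 :=
    continuous_subtype_val.comp (continuous_snd.comp continuous_subtype_val)
  let path : C(W × I, E) := ⟨fun z => D.g (z.1.snd.1 z.2), D.g.continuous.comp
    (continuous_eval.comp ((hsnd.comp continuous_fst).prodMk continuous_snd))⟩
  let track : Fin r → C(W × I, E) := fun i => ⟨fun z => D.H (z.1.fst.1 i, z.2), D.H.continuous.comp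
    (((continuous_apply i).comp (hfst.comp continuous_fst)).prodMk continuous_snd)⟩
  obtain ⟨G, hGnode, hGmem⟩ := exists_endpoint_homotopyExtension (tDiv_injective r) path track
    fun i w => (D.H_zero _).trans (congrArg D.g (hmatch w i))
  have hGfiber : ∀ w : W, ∃ b, ∀ t, p (G (w, t)) = b := fun w => by
    obtain ⟨b, hb⟩ := w.snd.2
    refine ⟨b, fun t => ?_⟩
    obtain ⟨s, hs⟩ | ⟨i, s, hs⟩ := hGmem w t
    · rw [hs]
      exact (D.apply_g _).trans (hb s)
    · rw [hs, ← hb (tDiv r i), ← hmatch w i, D.apply_f]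
      exact D.apply_H _ s
  exact ⟨fun w => ⟨G.curry w, hGfiber w⟩, Continuous.subtype_mk G.curry.continuous _,
    fun w => Subtype.ext (funext fun i => (hGnode w i).trans (D.H_one _))⟩

end Topological

theorem dTCfib_le [MetricSpace E] [MetricSpace E'] {p : E → B} {p' : E' → B}
    (D : FiberwiseDomination p p') (r : ℕ) : dTCfib p r ≤ dTCfib p' r := by
  obtain ⟨F, hF, hpF⟩ := D.exists_liftPath r
  exact dsecat_le_of_pullback (D.continuous_mapProd r) hF hpF

end FiberwiseDomination

theorem dTCfib_eq_of_fiberwiseHomotopyEquiv_general {E E' B : Type*} [MetricSpace E]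
    [MetricSpace E'] [TopologicalSpace B] {p : E → B} {p' : E' → B}
    (D : FiberwiseDomination p p') (D' : FiberwiseDomination p' p) (r : ℕ) :
    dTCfib p r = dTCfib p' r :=
  le_antisymm (D.dTCfib_le r) (D'.dTCfib_le r)

/-- Fiberwise homotopy equivalent fibrations (with metric total spaces)
over the same base have the same `r`-th sequential parametrized distributional
complexity, for every `r ≥ 2`. -/
theorem dTCfib_eq_of_fiberwiseHomotopyEquiv {E E' B : Type} [MetricSpace E] [MetricSpace E']
    [TopologicalSpace B] (p : E → B) (p' : E' → B)
    (hp : IsHurewiczFibration p) (hp' : IsHurewiczFibration p')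
    (f : E → E') (g : E' → E) (hf : Continuous f) (hg : Continuous g)
    (hfp : ∀ e, p' (f e) = p e) (hgp : ∀ e', p (g e') = p' e')
    (H : E × I → E) (hH : Continuous H)
    (hH0 : ∀ e, H (e, 0) = g (f e)) (hH1 : ∀ e, H (e, 1) = e)
    (hHfib : ∀ e t, p (H (e, t)) = p e)
    (H' : E' × I → E') (hH' : Continuous H')
    (hH'0 : ∀ e', H' (e', 0) = f (g e')) (hH'1 : ∀ e', H' (e', 1) = e')
    (hH'fib : ∀ e' t, p' (H' (e', t)) = p' e')
    (r : ℕ) (hr : 2 ≤ r) :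
    dTCfib p r = dTCfib p' r :=
  dTCfib_eq_of_fiberwiseHomotopyEquiv_general
    ⟨⟨f, hf⟩, ⟨g, hg⟩, ⟨H, hH⟩, hfp, hgp, hH0, hH1, hHfib⟩
    ⟨⟨g, hg⟩, ⟨f, hf⟩, ⟨H', hH'⟩, hgp, hfp, hH'0, hH'1, hH'fib⟩ r
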